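/- arXiv:1805.11810 — 4 statements merged into one kernel-verified Lean document; each statement's English description precedes it below -/
import Mathlib

section
/- Let D₁, D₂ ⊆ ℝ² be nonempty locally finite sets with D₁ ⊆ Q₁(α₁,β₁) and D₂ ⊆ Q₃(α₂,β₂) for some α₁,β₁,α₂,β₂ ∈ ℝ. Then there exist points p* ∈ D₁ and p** ∈ D₂, linearly independent vectors u,w ∈ ℝ² with cone C = C(u,w) and unit bisector v, and reals α' > 0, β' > 0, such that: (1) C ⊆ H_r(v,0), Q₁(0,0) ⊆ C and Q₃(0,0) ⊆ −C; (2) D₁ ∖ {p*} ⊆ p* + (C ∩ H_r(v,α')); (3) D₂ ∖ {p**} ⊆ p** + ((−C) ∩ H_l(v,−β')). -/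
/-!
Write `ℓ p = p.1 + a * p.2` for a slope `a > 0`. Since `D₁` and `D₂` are countable, all but
countably many slopes make `ℓ` injective on both of them
(`LocallyFiniteSet.exists_countable_bad_slopes`), so fix one such `a`.
A set in a translate of the first quadrant meets every half-plane `ℓ ≤ c` in a bounded, hence finite
set; so `ℓ` has a unique minimiser `p` on `D₁`, separated by a positive gap `δ` from the other values
(`exists_min_gap`). The points `q - p` are bounded below in both coordinates and satisfy
`δ ≤ ℓ (q - p)`, hence they all lie in the cone `ε * |y| ≤ x + a * y` for every small `ε > 0`
(`exists_min_cone`). The same applies to `-D₂`, and one `ε` serves both sets. This cone is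
generated by `u = (-(a - ε), 1)` and `w = (a + ε, -1)`; its bisector `v` has positive inner product
with `u` and `w`, so `⟨v, ·⟩` dominates a positive multiple of `ℓ` on the cone, and the gap in `ℓ`
becomes a gap in the direction `v`.
-/

open Pointwise

noncomputable section

/-- Euclidean norm on `ℝ²` (viewed as `ℝ × ℝ`). -/
def eNorm2 (p : ℝ × ℝ) : ℝ := Real.sqrt (p.1 ^ 2 + p.2 ^ 2)

/-- The (pointed) convex cone generated by `u` and `w`. -/
def coneOf (u w : ℝ × ℝ) : Set (ℝ × ℝ) :=
  {p | ∃ s t : ℝ, 0 ≤ s ∧ 0 ≤ t ∧ p = s • u + t • w}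

/-- The unit bisector of the cone generated by `u` and `w`: the unit vector in
the direction of `u/‖u‖ + w/‖w‖`. -/
def unitBisector (u w : ℝ × ℝ) : ℝ × ℝ :=
  (eNorm2 ((eNorm2 u)⁻¹ • u + (eNorm2 w)⁻¹ • w))⁻¹ •
    ((eNorm2 u)⁻¹ • u + (eNorm2 w)⁻¹ • w)

/-- Right half-plane `H_r(v,α) = {p : ⟨p,v⟩ ≥ α}`. -/
def Hr (v : ℝ × ℝ) (α : ℝ) : Set (ℝ × ℝ) := {p | α ≤ v.1 * p.1 + v.2 * p.2}

/-- Left half-plane `H_l(v,α) = {p : ⟨p,v⟩ ≤ α}`. -/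
def Hl (v : ℝ × ℝ) (α : ℝ) : Set (ℝ × ℝ) := {p | v.1 * p.1 + v.2 * p.2 ≤ α}

/-- A set is locally finite if it meets every compact set in a finite set. -/
def LocallyFiniteSet (D : Set (ℝ × ℝ)) : Prop :=
  ∀ K : Set (ℝ × ℝ), IsCompact K → (D ∩ K).Finite

/-- First closed quadrant translated to `(α,β)`. -/
def Quad1 (α β : ℝ) : Set (ℝ × ℝ) := {p | α ≤ p.1 ∧ β ≤ p.2}

/-- Second closed quadrant translated to `(α,β)`. -/
def Quad2 (α β : ℝ) : Set (ℝ × ℝ) := {p | p.1 ≤ α ∧ β ≤ p.2}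

/-- Third closed quadrant translated to `(α,β)`. -/
def Quad3 (α β : ℝ) : Set (ℝ × ℝ) := {p | p.1 ≤ α ∧ p.2 ≤ β}

/-- Fourth closed quadrant translated to `(α,β)`. -/
def Quad4 (α β : ℝ) : Set (ℝ × ℝ) := {p | α ≤ p.1 ∧ p.2 ≤ β}

/-! ### Locally finite sets and generic slopes -/

lemma LocallyFiniteSet.countable {D : Set (ℝ × ℝ)} (h : LocallyFiniteSet D) : D.Countable := by
  have hD : D = ⋃ n : ℕ, D ∩ Metric.closedBall 0 (n : ℝ) := by
    rw [← Set.inter_iUnion, Metric.iUnion_closedBall_nat, Set.inter_univ]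
  rw [hD]
  exact Set.countable_iUnion fun n => (h _ (isCompact_closedBall _ _)).countable

lemma LocallyFiniteSet.neg {D : Set (ℝ × ℝ)} (h : LocallyFiniteSet D) :
    LocallyFiniteSet (-D) := by
  intro K hK
  have h1 : -D ∩ K = -(D ∩ -K) := by simp [Set.inter_neg]
  rw [h1]
  exact (h _ hK.neg).neg

lemma LocallyFiniteSet.exists_countable_bad_slopes {D : Set (ℝ × ℝ)} (h : LocallyFiniteSet D) :
    ∃ B : Set ℝ, B.Countable ∧ ∀ a, a ∉ B → ∀ p ∈ D, ∀ q ∈ D,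
      p.1 + a * p.2 = q.1 + a * q.2 → p = q := by
  refine ⟨(fun z : (ℝ × ℝ) × (ℝ × ℝ) => (z.2.1 - z.1.1) / (z.1.2 - z.2.2)) '' (D ×ˢ D),
    (h.countable.prod h.countable).image _, fun a ha p hp q hq hpq => ?_⟩
  by_cases hy : p.2 = q.2
  · refine Prod.ext ?_ hy
    rw [hy] at hpq
    linarith
  · refine absurd ⟨(p, q), ⟨hp, hq⟩, ?_⟩ ha
    have : p.2 - q.2 ≠ 0 := sub_ne_zero.mpr hy
    simp only
    rw [div_eq_iff this]
    linarith

/-! ### Minimisers of a generic linear functional -/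

lemma exists_min_gap {D : Set (ℝ × ℝ)} (hne : D.Nonempty) (hlf : LocallyFiniteSet D)
    {α β a : ℝ} (hQ : D ⊆ Quad1 α β) (ha : 0 < a)
    (hinj : ∀ p ∈ D, ∀ q ∈ D, p.1 + a * p.2 = q.1 + a * q.2 → p = q) :
    ∃ p ∈ D, ∃ δ > 0, ∀ q ∈ D, q ≠ p → p.1 + a * p.2 + δ ≤ q.1 + a * q.2 := by
  obtain ⟨p₀, hp₀⟩ := hne
  set c : ℝ := p₀.1 + a * p₀.2 + 1 with hc
  have hF : {q ∈ D | q.1 + a * q.2 ≤ c}.Finite := by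
    refine (hlf (Set.Icc (α, β) (c - a * β, (c - α) / a)) isCompact_Icc).subset ?_
    rintro q ⟨hq, hqc⟩
    obtain ⟨h1, h2⟩ := hQ hq
    have h3 := mul_le_mul_of_nonneg_left h2 ha.le
    refine ⟨hq, ⟨h1, h2⟩, ?_, ?_⟩
    · change q.1 ≤ c - a * β
      linarith
    · change q.2 ≤ (c - α) / a
      rw [le_div_iff₀ ha]
      linarith
  obtain ⟨p, ⟨hpD, hpc⟩, hmin⟩ := hF.exists_minimalFor (fun q : ℝ × ℝ => q.1 + a * q.2) _
    ⟨p₀, hp₀, by linarith⟩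
  have hmin' : ∀ q ∈ D, q.1 + a * q.2 ≤ c → p.1 + a * p.2 ≤ q.1 + a * q.2 := fun q hq hqc =>
    (le_total (p.1 + a * p.2) (q.1 + a * q.2)).elim id fun h => hmin ⟨hq, hqc⟩ h
  have hp0 := hmin' p₀ hp₀ (by linarith)
  -- Points outside the finite set exceed the minimum by at least `1`, by the choice of `c`.
  rcases ({q ∈ D | q.1 + a * q.2 ≤ c} \ {p}).eq_empty_or_nonempty with he | hn
  · refine ⟨p, hpD, 1, one_pos, fun q hq hqp => ?_⟩
    by_contra! hlt
    have : q ∈ ({q ∈ D | q.1 + a * q.2 ≤ c} \ {p}) := ⟨⟨hq, by linarith⟩, hqp⟩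
    rw [he] at this
    exact this
  · obtain ⟨r, ⟨⟨hrD, hrc⟩, hrp⟩, hrmin⟩ :=
      (hF.subset Set.sdiff_subset).exists_minimalFor (fun q : ℝ × ℝ => q.1 + a * q.2) _ hn
    have hlt : p.1 + a * p.2 < r.1 + a * r.2 :=
      lt_of_le_of_ne (hmin' r hrD hrc) fun h => hrp (hinj p hpD r hrD h).symm
    refine ⟨p, hpD, min 1 (r.1 + a * r.2 - (p.1 + a * p.2)),
      lt_min one_pos (sub_pos.mpr hlt), fun q hq hqp => ?_⟩
    by_cases hqc : q.1 + a * q.2 ≤ c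
    · have h1 : r.1 + a * r.2 ≤ q.1 + a * q.2 :=
        (le_total (r.1 + a * r.2) (q.1 + a * q.2)).elim id fun h => hrmin ⟨⟨hq, hqc⟩, hqp⟩ h
      linarith [min_le_right (1 : ℝ) (r.1 + a * r.2 - (p.1 + a * p.2))]
    · linarith [min_le_left (1 : ℝ) (r.1 + a * r.2 - (p.1 + a * p.2))]

/-- The gap at the minimiser lets the half-plane `0 ≤ x + a * y` be narrowed to the cone
`ε * |y| ≤ x + a * y`, uniformly for all small `ε`. -/
lemma exists_min_cone {D : Set (ℝ × ℝ)} (hne : D.Nonempty) (hlf : LocallyFiniteSet D)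
    {α β a : ℝ} (hQ : D ⊆ Quad1 α β) (ha : 0 < a)
    (hinj : ∀ p ∈ D, ∀ q ∈ D, p.1 + a * p.2 = q.1 + a * q.2 → p = q) :
    ∃ p ∈ D, ∃ δ > 0, ∃ ε₀ > 0, ∀ ε, 0 < ε → ε ≤ ε₀ → ∀ q ∈ D, q ≠ p →
      δ ≤ (q - p).1 + a * (q - p).2 ∧ ε * |(q - p).2| ≤ (q - p).1 + a * (q - p).2 := by
  obtain ⟨p, hp, δ, hδ, hgap⟩ := exists_min_gap hne hlf hQ ha hinj
  -- `-M` bounds both coordinates of every difference `q - p` from below.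
  set M : ℝ := max (p.1 - α) (p.2 - β) with hM
  have hM0 : 0 ≤ M := le_trans (sub_nonneg.mpr (hQ hp).1) (le_max_left _ _)
  -- The first bound on `ε` handles `y < 0`, the other two handle `y ≥ 0`.
  refine ⟨p, hp, δ, hδ, min (δ / (M + 1)) (min (a / 2) (a * δ / (2 * (M + 1)))),
    by positivity, fun ε hε hle q hq hqp => ?_⟩
  obtain ⟨h1, h23⟩ := le_min_iff.mp hle
  obtain ⟨h2, h3⟩ := le_min_iff.mp h23
  rw [le_div_iff₀ (by positivity)] at h1 h3
  have hg := hgap q hq hqp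
  have hx : -M ≤ q.1 - p.1 := by linarith [(hQ hq).1, le_max_left (p.1 - α) (p.2 - β)]
  have hy : -M ≤ q.2 - p.2 := by linarith [(hQ hq).2, le_max_right (p.1 - α) (p.2 - β)]
  simp only [Prod.fst_sub, Prod.snd_sub]
  generalize hX : q.1 - p.1 = x at *
  generalize hY : q.2 - p.2 = y at *
  have hl : δ ≤ x + a * y := by
    rw [← hX, ← hY]
    linarith
  refine ⟨hl, ?_⟩
  rcases le_total 0 y with h | h
  · rw [abs_of_nonneg h]
    have h4 : a * y ≤ (x + a * y) + M := by linarith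
    have h5 : a * (ε * y) ≤ a * (x + a * y) := by
      have h6 : ε * (a * y) ≤ ε * ((x + a * y) + M) := mul_le_mul_of_nonneg_left h4 hε.le
      have h7 : ε * (x + a * y) ≤ a / 2 * (x + a * y) :=
        mul_le_mul_of_nonneg_right h2 (by linarith)
      have h8 : a * δ ≤ a * (x + a * y) := mul_le_mul_of_nonneg_left hl ha.le
      nlinarith
    exact le_of_mul_le_mul_left h5 ha
  · rw [abs_of_nonpos h]
    have := mul_le_mul_of_nonneg_left (show -y ≤ M by linarith) hε.le
    linarith

/-! ### The cone and its bisector -/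

lemma mem_coneOf_iff {a ε : ℝ} (hε : 0 < ε) (p : ℝ × ℝ) :
    p ∈ coneOf (-(a - ε), 1) (a + ε, -1) ↔ ε * |p.2| ≤ p.1 + a * p.2 := by
  have hab : ε * |p.2| ≤ p.1 + a * p.2 ↔
      ε * p.2 ≤ p.1 + a * p.2 ∧ -(ε * p.2) ≤ p.1 + a * p.2 := by
    rw [← abs_le', abs_mul, abs_of_pos hε]
  rw [hab]
  constructor
  · rintro ⟨s, t, hs, ht, rfl⟩
    have h1 := mul_nonneg hε.le hs
    have h2 := mul_nonneg hε.le ht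
    simp only [Prod.fst_add, Prod.snd_add, Prod.smul_fst, Prod.smul_snd, smul_eq_mul]
    constructor <;> linarith
  · rintro ⟨h1, h2⟩
    refine ⟨(p.1 + a * p.2 + ε * p.2) / (2 * ε), (p.1 + a * p.2 - ε * p.2) / (2 * ε),
      div_nonneg (by linarith) (by linarith), div_nonneg (by linarith) (by linarith), ?_⟩
    ext
    · simp only [Prod.fst_add, Prod.smul_fst, smul_eq_mul]
      field_simp
      ring
    · simp only [Prod.snd_add, Prod.smul_snd, smul_eq_mul]
      field_simp
      ring

lemma eNorm2_pos {p : ℝ × ℝ} (h : p ≠ 0) : 0 < eNorm2 p := by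
  refine Real.sqrt_pos.mpr ?_
  by_contra! hle
  refine h (Prod.ext ?_ ?_)
  · exact pow_eq_zero_iff two_ne_zero |>.mp (by nlinarith [sq_nonneg p.1, sq_nonneg p.2])
  · exact pow_eq_zero_iff two_ne_zero |>.mp (by nlinarith [sq_nonneg p.1, sq_nonneg p.2])

lemma eNorm2_sq (p : ℝ × ℝ) : eNorm2 p ^ 2 = p.1 ^ 2 + p.2 ^ 2 :=
  Real.sq_sqrt (by positivity)

lemma unitBisector_comm (u w : ℝ × ℝ) : unitBisector u w = unitBisector w u := by
  simp only [unitBisector, add_comm]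

/-- Up to a positive factor the inner product is `‖u‖ * ‖w‖ + ⟨u, w⟩`, which is positive by the
strict Cauchy–Schwarz inequality. -/
lemma unitBisector_inner_pos {u w : ℝ × ℝ} (hdet : u.1 * w.2 - u.2 * w.1 ≠ 0) :
    0 < (unitBisector u w).1 * u.1 + (unitBisector u w).2 * u.2 := by
  have hu : 0 < eNorm2 u := eNorm2_pos (by rintro rfl; simp at hdet)
  have hw : 0 < eNorm2 w := eNorm2_pos (by rintro rfl; simp at hdet)
  have hcs : 0 < eNorm2 u * eNorm2 w + (u.1 * w.1 + u.2 * w.2) := by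
    have h1 : (u.1 * w.1 + u.2 * w.2) ^ 2 < (eNorm2 u * eNorm2 w) ^ 2 := by
      rw [mul_pow, eNorm2_sq, eNorm2_sq]
      have := sq_pos_of_ne_zero hdet
      nlinarith
    linarith [(abs_lt.mp (abs_lt_of_sq_lt_sq h1 (by positivity))).1]
  unfold unitBisector
  set n : ℝ × ℝ := (eNorm2 u)⁻¹ • u + (eNorm2 w)⁻¹ • w with hn
  have hnu : 0 < n.1 * u.1 + n.2 * u.2 := by
    have : n.1 * u.1 + n.2 * u.2 =
        (eNorm2 w)⁻¹ * (eNorm2 u * eNorm2 w + (u.1 * w.1 + u.2 * w.2)) := by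
      simp only [hn, Prod.fst_add, Prod.snd_add, Prod.smul_fst, Prod.smul_snd, smul_eq_mul]
      have := eNorm2_sq u
      field_simp
      linear_combination (-eNorm2 w) * this
    rw [this]
    positivity
  have hnpos : 0 < eNorm2 n := eNorm2_pos (by intro h; simp [h] at hnu)
  simp only [Prod.smul_fst, Prod.smul_snd, smul_eq_mul]
  have : (eNorm2 n)⁻¹ * n.1 * u.1 + (eNorm2 n)⁻¹ * n.2 * u.2 =
      (eNorm2 n)⁻¹ * (n.1 * u.1 + n.2 * u.2) := by ring
  rw [this]
  positivity

/-- On the cone, the inner product with the bisector dominates a positive multiple of the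
functional `x + a * y`. -/
lemma exists_bisector_lower_bound {a ε : ℝ} (hε : 0 < ε) :
    ∃ m > 0, ∀ p ∈ coneOf (-(a - ε), 1) (a + ε, -1),
      m * (p.1 + a * p.2) ≤ (unitBisector (-(a - ε), 1) (a + ε, -1)).1 * p.1 +
        (unitBisector (-(a - ε), 1) (a + ε, -1)).2 * p.2 := by
  have hu := unitBisector_inner_pos (u := (-(a - ε), 1)) (w := (a + ε, -1))
    (by simp only; intro h; linarith)
  have hw := unitBisector_inner_pos (u := (a + ε, -1)) (w := (-(a - ε), 1))
    (by simp only; intro h; linarith)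
  rw [unitBisector_comm] at hw
  generalize unitBisector (-(a - ε), 1) (a + ε, -1) = v at *
  simp only at hu hw
  set k := min (v.1 * -(a - ε) + v.2 * 1) (v.1 * (a + ε) + v.2 * -1) with hk
  have hk0 : 0 < k := lt_min hu hw
  refine ⟨k / ε, by positivity, ?_⟩
  rintro p ⟨s, t, hs, ht, rfl⟩
  have h1 := mul_le_mul_of_nonneg_left
    (min_le_left (v.1 * -(a - ε) + v.2 * 1) (v.1 * (a + ε) + v.2 * -1)) hs
  have h2 := mul_le_mul_of_nonneg_left
    (min_le_right (v.1 * -(a - ε) + v.2 * 1) (v.1 * (a + ε) + v.2 * -1)) ht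
  rw [← hk] at h1 h2
  simp only [Prod.fst_add, Prod.snd_add, Prod.smul_fst, Prod.smul_snd, smul_eq_mul]
  -- On `s • u + t • w` the functional takes the value `ε * (s + t)`.
  have h3 : k / ε * (s * -(a - ε) + t * (a + ε) + a * (s * 1 + t * -1)) = s * k + t * k := by
    field_simp
    ring
  rw [h3]
  linarith

/-! ### Assembly of the common cone -/

/-- extraction of extreme points and a common cone for two
locally finite sets in the first and third quadrants. -/
theorem cone_for_quadrant_supported_discrete_sets
    (D₁ D₂ : Set (ℝ × ℝ)) (hne₁ : D₁.Nonempty) (hne₂ : D₂.Nonempty)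
    (hlf₁ : LocallyFiniteSet D₁) (hlf₂ : LocallyFiniteSet D₂)
    (α₁ β₁ α₂ β₂ : ℝ) (hQ₁ : D₁ ⊆ Quad1 α₁ β₁) (hQ₂ : D₂ ⊆ Quad3 α₂ β₂) :
    ∃ pstar ∈ D₁, ∃ pstarstar ∈ D₂, ∃ u w : ℝ × ℝ,
      LinearIndependent ℝ ![u, w] ∧
      ∃ α' > (0 : ℝ), ∃ β' > (0 : ℝ),
        coneOf u w ⊆ Hr (unitBisector u w) 0 ∧
        Quad1 0 0 ⊆ coneOf u w ∧
        Quad3 0 0 ⊆ -(coneOf u w) ∧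
        (∀ q ∈ D₁ \ {pstar}, q - pstar ∈ coneOf u w ∩ Hr (unitBisector u w) α') ∧
        (∀ q ∈ D₂ \ {pstarstar},
          q - pstarstar ∈ (-(coneOf u w)) ∩ Hl (unitBisector u w) (-β')) := by
  obtain ⟨B₁, hB₁, hinj₁⟩ := hlf₁.exists_countable_bad_slopes
  obtain ⟨B₂, hB₂, hinj₂⟩ := hlf₂.neg.exists_countable_bad_slopes
  obtain ⟨a, ha, haB⟩ : ∃ a ∈ Set.Ioi (0 : ℝ), a ∉ B₁ ∪ B₂ := by
    by_contra! h
    have hc := ((hB₁.union hB₂).mono h).le_aleph0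
    rw [Cardinal.mk_Ioi_real] at hc
    exact absurd hc Cardinal.aleph0_lt_continuum.not_ge
  rw [Set.mem_union, not_or] at haB
  have ha : 0 < a := ha
  have hQ₂' : -D₂ ⊆ Quad1 (-α₂) (-β₂) := fun q hq =>
    ⟨neg_le.mp (hQ₂ hq).1, neg_le.mp (hQ₂ hq).2⟩
  obtain ⟨p, hp, δ₁, hδ₁, ε₁, hε₁, h₁⟩ := exists_min_cone hne₁ hlf₁ hQ₁ ha (hinj₁ a haB.1)
  obtain ⟨r, hr, δ₂, hδ₂, ε₂, hε₂, h₂⟩ :=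
    exists_min_cone hne₂.neg hlf₂.neg hQ₂' ha (hinj₂ a haB.2)
  -- The bound `ε ≤ a` keeps the first quadrant inside the cone.
  obtain ⟨ε, hε, hle₁, hle₂, hlea⟩ : ∃ ε > 0, ε ≤ ε₁ ∧ ε ≤ ε₂ ∧ ε ≤ a :=
    ⟨min ε₁ (min ε₂ a), by positivity, min_le_left _ _,
      (min_le_right _ _).trans (min_le_left _ _), (min_le_right _ _).trans (min_le_right _ _)⟩
  obtain ⟨m, hm, hbis⟩ := exists_bisector_lower_bound (a := a) hε
  have hquad : Quad1 0 0 ⊆ coneOf (-(a - ε), 1) (a + ε, -1) := by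
    rintro q ⟨hx, hy⟩
    rw [mem_coneOf_iff hε, abs_of_nonneg hy]
    linarith [mul_le_mul_of_nonneg_right hlea hy]
  refine ⟨p, hp, -r, hr, (-(a - ε), 1), (a + ε, -1), ?_, m * δ₁, by positivity, m * δ₂,
    by positivity, ?_, hquad, ?_, ?_, ?_⟩
  · rw [LinearIndependent.pair_iff]
    intro s t h
    simp only [Prod.ext_iff, Prod.fst_add, Prod.snd_add, Prod.smul_fst, Prod.smul_snd,
      smul_eq_mul, Prod.fst_zero, Prod.snd_zero] at h
    obtain ⟨h1, h2⟩ := h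
    have hst : s = t := by linarith
    subst hst
    have hs : s = 0 := by
      have : ε * s = 0 := by linarith
      exact (mul_eq_zero.mp this).resolve_left hε.ne'
    exact ⟨hs, hs⟩
  · intro q hq
    have h := (mem_coneOf_iff hε q).mp hq
    exact (mul_nonneg hm.le (le_trans (by positivity) h)).trans (hbis q hq)
  · rintro q ⟨hx, hy⟩
    exact hquad ⟨neg_nonneg.mpr hx, neg_nonneg.mpr hy⟩
  · rintro q ⟨hq, hqp⟩
    obtain ⟨hl, hc⟩ := h₁ ε hε hle₁ q hq hqp
    have hmem := (mem_coneOf_iff hε (q - p)).mpr hc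
    exact ⟨hmem, (mul_le_mul_of_nonneg_left hl hm.le).trans (hbis _ hmem)⟩
  · rintro q ⟨hq, hqr⟩
    obtain ⟨hl, hc⟩ := h₂ ε hε hle₂ (-q) (by simpa using hq)
      (fun h => hqr (by simp [← h]))
    have hmem := (mem_coneOf_iff hε (-q - r)).mpr hc
    have hneg : -(q - -r) = -q - r := by abel
    refine ⟨?_, ?_⟩
    · rw [Set.mem_neg, hneg]
      exact hmem
    · have h3 := (mul_le_mul_of_nonneg_left hl hm.le).trans (hbis _ hmem)
      simp only [Hl, Set.mem_ofPred_eq]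
      simp only [Prod.fst_sub, Prod.snd_sub, Prod.fst_neg, Prod.snd_neg] at h3 ⊢
      linarith
end
end

section
/- Let D₁, D₂ ⊆ ℝ² be nonempty locally finite sets with D₁ ⊆ Q₂(α₁,β₁) and D₂ ⊆ Q₄(α₂,β₂) for some α₁,β₁,α₂,β₂ ∈ ℝ. Then there exist points p* ∈ D₁ and p** ∈ D₂, linearly independent vectors u,w ∈ ℝ² with cone C = C(u,w) and unit bisector v, and reals α' > 0, β' > 0, such that: (1) C ⊆ H_r(v,0), Q₂(0,0) ⊆ C and Q₄(0,0) ⊆ −C; (2) D₁ ∖ {p*} ⊆ p* + (C ∩ H_r(v,α')); (3) D₂ ∖ {p**} ⊆ p** + ((−C) ∩ H_l(v,−β')). -/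
/-!
The idea is to separate by a linear functional in general position. For `t > 0` put
`f p = p.2 - t * p.1`, the pairing with `(-t, 1)`, a vector interior to the second quadrant, and
`g p = p.1 + t * p.2`, the pairing with the orthogonal vector `(1, t)`. Since `D₁` is locally
finite in a translate of the second quadrant, each sublevel set of `f` on `D₁` is finite, so `f`
attains a minimum on every nonempty subset (`exists_min`). Locally finite sets are countable, so
`t` can be chosen such that `f` is injective on `D₁` and on `-D₂` (`exists_slope`). Then the
minimizer `p` is unique, and comparison with the second smallest value gives a gap
`f (q - p) ≥ δ > 0` for all other points `q`.

On a translated second quadrant `|g|` is bounded by an affine function of `f`; thanks to the gap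
this improves to `ε * |g (q - p)| ≤ f (q - p)` for all small `ε > 0` (`exists_gap_cone`). The set
`{p | ε * |g p| ≤ f p}` is exactly the cone with generators `ε • (-t, 1) ± (1, t)`, whose bisector
is parallel to `(-t, 1)`, and for small `ε` it contains the second quadrant. The statement for
`D₂` is the one for `-D₂`, with the same `t`, and `ε` is taken small enough for both.
-/


open Pointwise

noncomputable section

/-! ### Minimizers of a linear functional on a locally finite set in a quadrant -/

/-- Minimum of `p.2 - t * p.1` over a locally finite set in a second quadrant: the sublevel sets
of this functional within the quadrant are bounded. -/
lemma exists_min {D : Set (ℝ × ℝ)} (hne : D.Nonempty) (hlf : LocallyFiniteSet D)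
    {α β t : ℝ} (ht : 0 < t) (hQ : D ⊆ Quad2 α β) :
    ∃ p ∈ D, ∀ q ∈ D, p.2 - t * p.1 ≤ q.2 - t * q.1 := by
  obtain ⟨r, hr⟩ := hne
  set M := r.2 - t * r.1 with hM
  have hfin : (D ∩ Set.Icc ((β - M) / t, β) (α, M + t * α)).Finite := hlf _ isCompact_Icc
  have hmem : ∀ q ∈ D, q.2 - t * q.1 ≤ M →
      q ∈ D ∩ Set.Icc ((β - M) / t, β) (α, M + t * α) := by
    intro q hq hqM
    obtain ⟨h1, h2⟩ := hQ hq
    refine ⟨hq, Prod.mk_le_mk.2 ⟨?_, h2⟩, Prod.mk_le_mk.2 ⟨h1, ?_⟩⟩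
    · rw [div_le_iff₀ ht]; nlinarith
    · nlinarith
  obtain ⟨p, hp, hmin⟩ := Set.exists_min_image _ (fun q : ℝ × ℝ => q.2 - t * q.1) hfin
    ⟨r, hmem r hr le_rfl⟩
  refine ⟨p, hp.1, fun q hq => ?_⟩
  rcases le_total (q.2 - t * q.1) M with h | h
  · exact hmin q (hmem q hq h)
  · exact (hmin r (hmem r hr le_rfl)).trans h

/-- If `p.2 - t * p.1` is injective on `D`, its minimizer is separated from the other points of
`D` by a positive gap, and those points lie in every sufficiently wide cone with apex at the
minimizer and axis direction `(-t, 1)`. -/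
lemma exists_gap_cone {D : Set (ℝ × ℝ)} (hne : D.Nonempty) (hlf : LocallyFiniteSet D)
    {α β t : ℝ} (ht : 0 < t) (hQ : D ⊆ Quad2 α β)
    (hinj : Set.InjOn (fun q : ℝ × ℝ => q.2 - t * q.1) D) :
    ∃ p ∈ D, ∃ δ > 0, ∃ ε₀ > 0, ∀ ε, 0 < ε → ε ≤ ε₀ → ∀ q ∈ D \ {p},
      δ ≤ (q - p).2 - t * (q - p).1 ∧
      ε * |(q - p).1 + t * (q - p).2| ≤ (q - p).2 - t * (q - p).1 := by
  obtain ⟨p, hp, hmin⟩ := exists_min hne hlf ht hQ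
  obtain ⟨hp1, hp2⟩ := hQ hp
  obtain ⟨δ, hδ, hgap⟩ : ∃ δ > 0, ∀ q ∈ D \ {p}, δ ≤ (q - p).2 - t * (q - p).1 := by
    rcases (D \ {p}).eq_empty_or_nonempty with he | hne'
    · exact ⟨1, one_pos, by simp [he]⟩
    · obtain ⟨p', hp', hmin'⟩ := exists_min hne'
        (fun K hK => (hlf K hK).subset (Set.inter_subset_inter_left _ Set.sdiff_subset))
        ht (Set.sdiff_subset.trans hQ)
      refine ⟨(p'.2 - t * p'.1) - (p.2 - t * p.1), ?_, ?_⟩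
      · have h1 := hmin p' hp'.1
        have h2 : p.2 - t * p.1 ≠ p'.2 - t * p'.1 := fun h => hp'.2 (hinj hp hp'.1 h).symm
        have := lt_of_le_of_ne h1 h2
        linarith
      · intro q hq
        have := hmin' q hq
        simp only [Prod.fst_sub, Prod.snd_sub]
        linarith
  -- `a, b ≥ 0` measure how far `p` is from the corner; `|g| ≤ K * f + L` on the quadrant.
  set a := α - p.1 with ha
  set b := p.2 - β with hb
  have ha0 : 0 ≤ a := sub_nonneg.2 hp1
  have hb0 : 0 ≤ b := sub_nonneg.2 hp2
  set K := 1 / t + t with hK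
  set L := K * (b + t * a) + a + t * b with hL
  have hK0 : 0 < K := by positivity
  have hL0 : 0 ≤ L := by positivity
  refine ⟨p, hp, δ, hδ, 1 / (K + L / δ), by positivity, fun ε hε hεle q hq => ⟨hgap q hq, ?_⟩⟩
  have hf := hgap q hq
  obtain ⟨hq1, hq2⟩ := hQ hq.1
  set x := (q - p).1 with hx
  set y := (q - p).2 with hy
  have hxa : 0 ≤ a - x := by simp only [ha, hx, Prod.fst_sub]; linarith
  have hyb : 0 ≤ y + b := by simp only [hb, hy, Prod.snd_sub]; linarith
  set F := y - t * x with hF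
  have h1 : a - x ≤ 1 / t * (F + b + t * a) := by
    rw [one_div_mul_eq_div, le_div_iff₀ ht]; nlinarith
  have h2 : t * (y + b) ≤ t * (F + b + t * a) := by
    apply mul_le_mul_of_nonneg_left _ ht.le; nlinarith
  have htb : 0 ≤ t * b := by positivity
  have htyb : 0 ≤ t * (y + b) := by positivity
  have hg : |x + t * y| ≤ K * F + L := by
    have : K * F + L = 1 / t * (F + b + t * a) + t * (F + b + t * a) + a + t * b := by
      rw [hL, hK]; ring
    rw [this, abs_le]
    constructor <;> nlinarith
  have hLF : L ≤ L / δ * F := by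
    rw [div_mul_eq_mul_div, le_div_iff₀ hδ]
    exact mul_le_mul_of_nonneg_left hf hL0
  have hF0 : 0 ≤ F := hδ.le.trans hf
  have hpos : 0 < K + L / δ := by positivity
  calc ε * |x + t * y| ≤ 1 / (K + L / δ) * ((K + L / δ) * F) := by
        apply mul_le_mul hεle _ (abs_nonneg _) (by positivity)
        linarith
    _ = F := by field_simp

/-- Only countably many slopes `t` are slopes of a line through two points of a countable set. -/
lemma exists_slope {D : Set (ℝ × ℝ)} (hD : D.Countable) :
    ∃ t > 0, Set.InjOn (fun q : ℝ × ℝ => q.2 - t * q.1) D := by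
  have hbad := (hD.prod hD).image
    (fun z : (ℝ × ℝ) × (ℝ × ℝ) => (z.1.2 - z.2.2) / (z.1.1 - z.2.1))
  obtain ⟨t, ht, htpos⟩ := (hbad.dense_compl ℝ).exists_mem_open isOpen_Ioi
    (⟨1, Set.mem_Ioi.2 one_pos⟩ : (Set.Ioi (0 : ℝ)).Nonempty)
  refine ⟨t, htpos, fun p hp q hq h => ?_⟩
  simp only at h
  by_cases hx : p.1 = q.1
  · refine Prod.ext hx ?_
    rw [hx] at h
    linarith
  · refine absurd ⟨(p, q), ⟨hp, hq⟩, ?_⟩ ht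
    have : p.1 - q.1 ≠ 0 := sub_ne_zero.2 hx
    simp only
    rw [div_eq_iff this]
    linarith

/-! ### The symmetric cone around `(-t, 1)` -/

/-- The generators are `ε • (-t, 1) ± (1, t)`; the coefficients of `p` come from its coordinates
in the orthogonal basis `(-t, 1)`, `(1, t)`. -/
lemma mem_coneOf {t ε : ℝ} (hε : 0 < ε) {p : ℝ × ℝ}
    (h : ε * |p.1 + t * p.2| ≤ p.2 - t * p.1) :
    p ∈ coneOf (1 - ε * t, t + ε) (-1 - ε * t, -t + ε) := by
  have h1 : ε * (p.1 + t * p.2) ≤ p.2 - t * p.1 :=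
    (mul_le_mul_of_nonneg_left (le_abs_self _) hε.le).trans h
  have h2 : ε * -(p.1 + t * p.2) ≤ p.2 - t * p.1 :=
    (mul_le_mul_of_nonneg_left (neg_le_abs _) hε.le).trans h
  have hc : 0 < 2 * ε * (1 + t ^ 2) := by positivity
  refine ⟨((p.2 - t * p.1) + ε * (p.1 + t * p.2)) / (2 * ε * (1 + t ^ 2)),
    ((p.2 - t * p.1) - ε * (p.1 + t * p.2)) / (2 * ε * (1 + t ^ 2)),
    div_nonneg (by linarith) hc.le, div_nonneg (by linarith) hc.le, ?_⟩
  ext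
  · simp only [Prod.fst_add, Prod.smul_fst, smul_eq_mul]
    field_simp
    ring
  · simp only [Prod.snd_add, Prod.smul_snd, smul_eq_mul]
    field_simp
    ring

lemma nonneg_of_mem_coneOf {t ε : ℝ} (hε : 0 < ε) {p : ℝ × ℝ}
    (h : p ∈ coneOf (1 - ε * t, t + ε) (-1 - ε * t, -t + ε)) : 0 ≤ p.2 - t * p.1 := by
  obtain ⟨s, r, hs, hr, rfl⟩ := h
  simp only [Prod.fst_add, Prod.smul_fst, Prod.snd_add, Prod.smul_snd, smul_eq_mul]
  have : 0 ≤ (s + r) * (ε * (1 + t ^ 2)) := by positivity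
  linarith

/-- The two generators have equal length, so their bisector is a positive multiple of their sum,
hence of `(-t, 1)`. -/
lemma exists_unitBisector_eq {t ε : ℝ} (hε : 0 < ε) :
    ∃ c > 0, unitBisector (1 - ε * t, t + ε) (-1 - ε * t, -t + ε) = (-(c * t), c) := by
  have hN : 0 < (1 - ε * t) ^ 2 + (t + ε) ^ 2 := by
    have : (1 - ε * t) ^ 2 + (t + ε) ^ 2 = (1 + ε ^ 2) * (1 + t ^ 2) := by ring
    rw [this]; positivity
  set N := eNorm2 (1 - ε * t, t + ε) with hNdef
  have hNpos : 0 < N := Real.sqrt_pos.2 hN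
  have hN' : eNorm2 (-1 - ε * t, -t + ε) = N := by
    simp only [hNdef, eNorm2]
    congr 1
    ring
  have hsum : N⁻¹ • ((1 - ε * t, t + ε) : ℝ × ℝ) + N⁻¹ • ((-1 - ε * t, -t + ε) : ℝ × ℝ)
      = (-(2 * ε * N⁻¹ * t), 2 * ε * N⁻¹) := by
    ext <;> simp only [Prod.fst_add, Prod.smul_fst, Prod.snd_add, Prod.smul_snd, smul_eq_mul] <;>
      ring
  have hpos : 0 < eNorm2 (-(2 * ε * N⁻¹ * t), 2 * ε * N⁻¹) := by
    apply Real.sqrt_pos.2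
    positivity
  refine ⟨(eNorm2 (-(2 * ε * N⁻¹ * t), 2 * ε * N⁻¹))⁻¹ * (2 * ε * N⁻¹), by positivity, ?_⟩
  rw [unitBisector, hN', ← hNdef, hsum]
  ext <;> simp <;> ring

/-- extraction of extreme points and a common cone for two
locally finite sets in the second and fourth quadrants. -/
theorem cone_for_quadrant_supported_discrete_sets'
    (D₁ D₂ : Set (ℝ × ℝ)) (hne₁ : D₁.Nonempty) (hne₂ : D₂.Nonempty)
    (hlf₁ : LocallyFiniteSet D₁) (hlf₂ : LocallyFiniteSet D₂)
    (α₁ β₁ α₂ β₂ : ℝ) (hQ₁ : D₁ ⊆ Quad2 α₁ β₁) (hQ₂ : D₂ ⊆ Quad4 α₂ β₂) :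
    ∃ pstar ∈ D₁, ∃ pstarstar ∈ D₂, ∃ u w : ℝ × ℝ,
      LinearIndependent ℝ ![u, w] ∧
      ∃ α' > (0 : ℝ), ∃ β' > (0 : ℝ),
        coneOf u w ⊆ Hr (unitBisector u w) 0 ∧
        Quad2 0 0 ⊆ coneOf u w ∧
        Quad4 0 0 ⊆ -(coneOf u w) ∧
        (∀ q ∈ D₁ \ {pstar}, q - pstar ∈ coneOf u w ∩ Hr (unitBisector u w) α') ∧
        (∀ q ∈ D₂ \ {pstarstar},
          q - pstarstar ∈ (-(coneOf u w)) ∩ Hl (unitBisector u w) (-β')) := by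
  obtain ⟨t, ht, hinj⟩ := exists_slope (hlf₁.countable.union hlf₂.neg.countable)
  obtain ⟨p, hp, δ₁, hδ₁, ε₁, hε₁, H₁⟩ := exists_gap_cone hne₁ hlf₁ ht hQ₁
    (hinj.mono Set.subset_union_left)
  have hQ₂' : -D₂ ⊆ Quad2 (-α₂) (-β₂) := by
    intro q hq
    obtain ⟨h1, h2⟩ := hQ₂ hq
    exact ⟨le_neg.1 h1, neg_le.1 h2⟩
  obtain ⟨r, hr, δ₂, hδ₂, ε₂, hε₂, H₂⟩ := exists_gap_cone hne₂.neg hlf₂.neg ht hQ₂'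
    (hinj.mono Set.subset_union_right)
  -- The bounds `t` and `1 / t` make the cone contain the second quadrant.
  obtain ⟨ε, hε, hle₁, hle₂, hlet, hlet'⟩ :
      ∃ ε > 0, ε ≤ ε₁ ∧ ε ≤ ε₂ ∧ ε ≤ t ∧ ε ≤ 1 / t :=
    ⟨min (min ε₁ ε₂) (min t (1 / t)), by positivity,
      (min_le_left _ _).trans (min_le_left _ _), (min_le_left _ _).trans (min_le_right _ _),
      (min_le_right _ _).trans (min_le_left _ _), (min_le_right _ _).trans (min_le_right _ _)⟩
  rw [le_div_iff₀ ht] at hlet'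
  obtain ⟨c, hc, hv⟩ := exists_unitBisector_eq (t := t) hε
  have hquad : Quad2 0 0 ⊆ coneOf (1 - ε * t, t + ε) (-1 - ε * t, -t + ε) := by
    rintro q ⟨h1, h2⟩
    apply mem_coneOf hε
    have e1 : ε * -q.1 ≤ t * -q.1 := mul_le_mul_of_nonneg_right hlet (by linarith)
    have e2 : ε * t * q.2 ≤ 1 * q.2 := mul_le_mul_of_nonneg_right hlet' h2
    have e3 : 0 ≤ ε * -q.1 := mul_nonneg hε.le (by linarith)
    have e4 : 0 ≤ ε * t * q.2 := by positivity
    have habs : ε * |q.1 + t * q.2| = |ε * (q.1 + t * q.2)| := by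
      rw [abs_mul, abs_of_pos hε]
    rw [habs, abs_le]
    constructor <;> linarith
  refine ⟨p, hp, -r, hr, (1 - ε * t, t + ε), (-1 - ε * t, -t + ε), ?_, c * δ₁, by positivity,
    c * δ₂, by positivity, ?_, hquad, ?_, ?_, ?_⟩
  · rw [LinearIndependent.pair_iff]
    intro s s' h
    have h1 := congrArg Prod.fst h
    have h2 := congrArg Prod.snd h
    simp only [Prod.fst_add, Prod.smul_fst, Prod.snd_add, Prod.smul_snd, smul_eq_mul,
      Prod.fst_zero, Prod.snd_zero] at h1 h2
    have hT : (1 + t ^ 2) ≠ 0 := by positivity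
    have hd : s - s' = 0 := by
      have : (s - s') * (1 + t ^ 2) = 0 := by linear_combination h1 + t * h2
      exact (mul_eq_zero.1 this).resolve_right hT
    have hs : s + s' = 0 := by
      have : (s + s') * (ε * (1 + t ^ 2)) = 0 := by linear_combination h2 - t * h1
      exact (mul_eq_zero.1 this).resolve_right (mul_ne_zero hε.ne' hT)
    constructor <;> linarith
  · intro q hq
    have := mul_nonneg hc.le (nonneg_of_mem_coneOf hε hq)
    simp only [Hr, hv, Set.mem_ofPred_eq]
    linarith
  · rintro q ⟨h1, h2⟩
    exact hquad ⟨neg_nonpos.2 h1, neg_nonneg.2 h2⟩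
  · intro q hq
    obtain ⟨h1, h2⟩ := H₁ ε hε hle₁ q hq
    refine ⟨mem_coneOf hε h2, ?_⟩
    have := mul_le_mul_of_nonneg_left h1 hc.le
    simp only [Hr, hv, Set.mem_ofPred_eq]
    linarith
  · rintro q ⟨hq, hqr⟩
    obtain ⟨h1, h2⟩ := H₂ ε hε hle₂ (-q) ⟨by simpa using hq, fun h => hqr (by
      rw [← Set.mem_singleton_iff.1 h]; simp)⟩
    have hneg : -(q - -r) = -q - r := by abel
    refine ⟨?_, ?_⟩
    · rw [Set.mem_neg, hneg]
      exact mem_coneOf hε h2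
    · have := mul_le_mul_of_nonneg_left h1 hc.le
      simp only [Hl, hv, Set.mem_ofPred_eq]
      simp only [Prod.fst_sub, Prod.snd_sub, Prod.fst_neg, Prod.snd_neg] at this ⊢
      linarith
end
end

section
/- Let v = (v₁,v₂) ∈ ℝ² with v₁ > 0 and v₂ > 0, let A ∈ ℝ, let S, T > 0, and let g ∈ C^{2*}(ℝ²) with supp(g) ⊆ H_l(v,A). Then for every (x,y) ∈ ℝ², only finitely many pairs (j,k) ∈ ℕ×ℕ give a nonzero term, and ∑_{j=0}^{∞} ∑_{k=0}^{∞} ∫_{−S}^{S} ∫_{−T}^{T} (∂²g/∂x∂y)(x + (2j+1)S − s, y + (2k+1)T − t) dt ds = g(x,y). -/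
/-!
The substitution `u = x + (2j+1)S - s`, `w = y + (2k+1)T - t` turns the `(j,k)` term into the integral
of `∂²g/∂x∂y` over the grid cell `[x+2jS, x+2(j+1)S] × [y+2kT, y+2(k+1)T]`. By Fubini and two
applications of the fundamental theorem of calculus (`integral_mixed`) it equals the alternating sum
of `g` over the four corners of the cell. Since `v.1, v.2 > 0`, `g` vanishes at the grid point
`(x+2jS, y+2kT)` once `j` or `k` is large. So only finitely many terms survive, and the double sum
telescopes to the corner value `g (x, y)` (`finsum_corner`).
-/


noncomputable section

/-- Partial derivative in the first (x) variable. -/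
def pX (f : ℝ × ℝ → ℂ) : ℝ × ℝ → ℂ := fun p => deriv (fun x => f (x, p.2)) p.1

/-- Partial derivative in the second (y) variable. -/
def pY (f : ℝ × ℝ → ℂ) : ℝ × ℝ → ℂ := fun p => deriv (fun y => f (p.1, y)) p.2

/-- `f ∈ C^{2*}(ℝ²)`: `f` is continuous, the first partials and the mixed
second partials `∂²f/∂x∂y`, `∂²f/∂y∂x` exist everywhere, and both mixed second
partials are continuous on `ℝ²`. -/
def C2Star (f : ℝ × ℝ → ℂ) : Prop :=
  Continuous f ∧
  (∀ p : ℝ × ℝ, DifferentiableAt ℝ (fun x => f (x, p.2)) p.1) ∧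
  (∀ p : ℝ × ℝ, DifferentiableAt ℝ (fun y => f (p.1, y)) p.2) ∧
  (∀ p : ℝ × ℝ, DifferentiableAt ℝ (fun x => pY f (x, p.2)) p.1) ∧
  (∀ p : ℝ × ℝ, DifferentiableAt ℝ (fun y => pX f (p.1, y)) p.2) ∧
  Continuous (pX (pY f)) ∧ Continuous (pY (pX f))

/-- The integral of `∂²g/∂x∂y` over a rectangle is the alternating sum of `g` over its corners.
The integrability needed for the second use of the fundamental theorem of calculus holds because
`∂g/∂y (b, ·) - ∂g/∂y (a, ·)` is a parametric integral of the continuous mixed derivative; `∂g/∂y`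
itself need not be continuous. -/
lemma integral_mixed {g : ℝ × ℝ → ℂ} (hg : C2Star g) (a b c d : ℝ) :
    ∫ s in a..b, ∫ t in c..d, pX (pY g) (s, t) =
      g (b, d) - g (a, d) - g (b, c) + g (a, c) := by
  obtain ⟨-, -, hy, hyx, -, hc, -⟩ := hg
  have hin : ∀ t : ℝ, ∫ s in a..b, pX (pY g) (s, t) = pY g (b, t) - pY g (a, t) := by
    intro t
    refine intervalIntegral.integral_eq_sub_of_hasDerivAt (f := fun s => pY g (s, t))
      (fun s _ => (hyx (s, t)).hasDerivAt) ?_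
    exact (hc.comp (by fun_prop : Continuous fun s : ℝ => (s, t))).intervalIntegrable _ _
  have hcont : Continuous fun t : ℝ => pY g (b, t) - pY g (a, t) := by
    simp_rw [← hin]
    exact intervalIntegral.continuous_parametric_intervalIntegral_of_continuous'
      (f := fun t s => pX (pY g) (s, t)) (hc.comp continuous_swap) a b
  rw [MeasureTheory.intervalIntegral_intervalIntegral_swap]
  · simp_rw [hin]
    rw [intervalIntegral.integral_eq_sub_of_hasDerivAt (f := fun t => g (b, t) - g (a, t))
      (f' := fun t => pY g (b, t) - pY g (a, t))
      (fun t _ => (hy (b, t)).hasDerivAt.sub (hy (a, t)).hasDerivAt)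
      (hcont.intervalIntegrable _ _)]
    ring
  · exact (hc.continuousOn.integrableOn_compact (isCompact_uIcc.prod isCompact_uIcc)).mono_set
      (Set.prod_mono Set.uIoc_subset_uIcc Set.uIoc_subset_uIcc)

/-- Two-dimensional telescoping: if `G` vanishes outside the square `[0, N) × [0, N)`, the mixed
second differences of `G` are finitely supported and sum to `G 0 0`. -/
lemma finsum_corner (G : ℕ → ℕ → ℂ) (N : ℕ) (h1 : ∀ j k, N ≤ j → G j k = 0)
    (h2 : ∀ j k, N ≤ k → G j k = 0) :
    (Function.support (fun jk : ℕ × ℕ => G (jk.1 + 1) (jk.2 + 1) - G jk.1 (jk.2 + 1)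
        - G (jk.1 + 1) jk.2 + G jk.1 jk.2)).Finite ∧
      ∑ᶠ jk : ℕ × ℕ, (G (jk.1 + 1) (jk.2 + 1) - G jk.1 (jk.2 + 1)
        - G (jk.1 + 1) jk.2 + G jk.1 jk.2) = G 0 0 := by
  have hsub : Function.support (fun jk : ℕ × ℕ => G (jk.1 + 1) (jk.2 + 1) - G jk.1 (jk.2 + 1)
        - G (jk.1 + 1) jk.2 + G jk.1 jk.2) ⊆
        ↑(Finset.range N ×ˢ Finset.range N) := by
    rintro ⟨j, k⟩ hjk
    by_contra hn
    apply hjk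
    simp only [Finset.coe_product, Finset.coe_range, Set.mem_prod, Set.mem_Iio, not_and_or,
      not_lt] at hn
    rcases hn with h | h
    · simp [h1 _ _ h, h1 (j + 1) _ (by omega)]
    · simp [h2 _ _ h, h2 _ (k + 1) (by omega)]
  refine ⟨(Finset.finite_toSet _).subset hsub, ?_⟩
  rw [finsum_eq_sum_of_support_subset _ hsub, Finset.sum_product]
  have hinner : ∀ j, ∑ k ∈ Finset.range N,
      (G (j + 1) (k + 1) - G j (k + 1) - G (j + 1) k + G j k) = G j 0 - G (j + 1) 0 := by
    intro j
    have := Finset.sum_range_sub (fun k => G (j + 1) k - G j k) N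
    rw [h2 _ N le_rfl, h2 _ N le_rfl] at this
    calc _ = ∑ k ∈ Finset.range N, (G (j + 1) (k + 1) - G j (k + 1) - (G (j + 1) k - G j k)) :=
          Finset.sum_congr rfl fun k _ => by ring
      _ = _ := by rw [this]; ring
  simp_rw [hinner]
  rw [Finset.sum_range_sub' (fun j => G j 0), h1 N 0 le_rfl, sub_zero]

/-- inversion series for a single centered rectangle, for
data supported in a left half-plane. -/
theorem rectangle_inversion_series_left
    (v : ℝ × ℝ) (hv1 : 0 < v.1) (hv2 : 0 < v.2) (A : ℝ)
    (S T : ℝ) (hS : 0 < S) (hT : 0 < T)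
    (g : ℝ × ℝ → ℂ) (hg : C2Star g) (hsupp : Function.support g ⊆ Hl v A) :
    ∀ x y : ℝ,
      (Function.support (fun jk : ℕ × ℕ =>
        ∫ s in -S..S, ∫ t in -T..T,
          pX (pY g) (x + (2 * (jk.1 : ℝ) + 1) * S - s,
                     y + (2 * (jk.2 : ℝ) + 1) * T - t))).Finite ∧
      ∑ᶠ jk : ℕ × ℕ,
        (∫ s in -S..S, ∫ t in -T..T,
          pX (pY g) (x + (2 * (jk.1 : ℝ) + 1) * S - s,
                     y + (2 * (jk.2 : ℝ) + 1) * T - t)) = g (x, y) := by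
  intro x y
  have hterm : ∀ jk : ℕ × ℕ, (∫ s in -S..S, ∫ t in -T..T,
          pX (pY g) (x + (2 * (jk.1 : ℝ) + 1) * S - s,
                     y + (2 * (jk.2 : ℝ) + 1) * T - t)) =
      g (x + 2 * ((jk.1 + 1 : ℕ) : ℝ) * S, y + 2 * ((jk.2 + 1 : ℕ) : ℝ) * T)
        - g (x + 2 * (jk.1 : ℝ) * S, y + 2 * ((jk.2 + 1 : ℕ) : ℝ) * T)
        - g (x + 2 * ((jk.1 + 1 : ℕ) : ℝ) * S, y + 2 * (jk.2 : ℝ) * T)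
        + g (x + 2 * (jk.1 : ℝ) * S, y + 2 * (jk.2 : ℝ) * T) := by
    rintro ⟨j, k⟩
    rw [← integral_mixed hg]
    have hin : ∀ u : ℝ, ∫ t in -T..T, pX (pY g) (u, y + (2 * (k : ℝ) + 1) * T - t) =
        ∫ t in (y + 2 * (k : ℝ) * T)..(y + 2 * ((k + 1 : ℕ) : ℝ) * T), pX (pY g) (u, t) := by
      intro u
      rw [intervalIntegral.integral_comp_sub_left (fun t => pX (pY g) (u, t))]
      congr 1 <;> push_cast <;> ring
    simp_rw [hin]
    rw [intervalIntegral.integral_comp_sub_left (fun s =>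
      ∫ t in (y + 2 * (k : ℝ) * T)..(y + 2 * ((k + 1 : ℕ) : ℝ) * T), pX (pY g) (s, t))]
    congr 1 <;> push_cast <;> ring
  have hzero : ∀ p : ℝ × ℝ, A < v.1 * p.1 + v.2 * p.2 → g p = 0 := by
    intro p hp
    by_contra h
    exact absurd (hsupp h) (not_le.2 hp)
  -- A grid point with an index at least `N` exceeds the level `A`, since
  -- `v.1 * (x+2jS) + v.2 * (y+2kT)` is at least its value at `(x, y)` plus `2N * min (v.1*S) (v.2*T)`.
  obtain ⟨N₁, hN₁⟩ := exists_nat_gt ((A - v.1 * x - v.2 * y) / (2 * (v.1 * S)))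
  obtain ⟨N₂, hN₂⟩ := exists_nat_gt ((A - v.1 * x - v.2 * y) / (2 * (v.2 * T)))
  have hvS : 0 < v.1 * S := mul_pos hv1 hS
  have hvT : 0 < v.2 * T := mul_pos hv2 hT
  rw [div_lt_iff₀ (by positivity)] at hN₁ hN₂
  have key := finsum_corner
    (fun j k => g (x + 2 * (j : ℝ) * S, y + 2 * (k : ℝ) * T)) (max N₁ N₂)
    (fun j k hj => hzero _ (by
      have h : (N₁ : ℝ) ≤ j := by exact_mod_cast (le_max_left _ _).trans hj
      have h' := mul_le_mul_of_nonneg_right h hvS.le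
      have h'' : 0 ≤ (k : ℝ) * (v.2 * T) := by positivity
      dsimp only
      linarith))
    (fun j k hk => hzero _ (by
      have h : (N₂ : ℝ) ≤ k := by exact_mod_cast (le_max_right _ _).trans hk
      have h' := mul_le_mul_of_nonneg_right h hvT.le
      have h'' : 0 ≤ (j : ℝ) * (v.1 * S) := by positivity
      dsimp only
      linarith))
  simp_rw [hterm]
  simpa using key
end
end

section
/- Let v = (v₁,v₂) ∈ ℝ² with v₁ > 0 and v₂ > 0, let A ∈ ℝ, let S, T > 0, and let g ∈ C^{2*}(ℝ²) with supp(g) ⊆ H_r(v,A). Define f : ℝ² → ℂ by f(x,y) = ∑_{j=0}^{∞} ∑_{k=0}^{∞} (∂²g/∂x∂y)(x − (2j+1)S, y − (2k+1)T), where for each (x,y) only finitely many terms are nonzero. Then f is continuous on ℝ² and for all (x,y) ∈ ℝ², ∫_{−S}^{S} ∫_{−T}^{T} f(x−s, y−t) dt ds = g(x,y); that is, f⋆χ_{[−S,S]×[−T,T]} = g. -/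
/-!
Write `h = ∂²g/∂x∂y`. Since `g` vanishes on the open half-plane `⟨p, v⟩ < A`, so do its partial
derivatives and `h`. As `v` has positive coordinates, on each half-plane `⟨p, v⟩ ≤ M` only the terms
with `j, k < N` of the series survive, for some `N = N(M)` (`finsum_eq_sum_range`); this gives local
finiteness and continuity of `f`.

For the convolution, the translates of `[-S, S]` by `(2j+1)S`, `j < N`, tile an interval of length
`2NS` (`integral_sum_translates`), and likewise in the second variable. Hence the integral of `f`
over the rectangle is the integral of `h` over `[x - 2NS, x] × [y - 2NT, y]`. Two applications of
the fundamental theorem of calculus evaluate it (`integral_integral_mixed`): for large `N` the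
boundary terms on the left and lower sides vanish, and `g (x, y)` remains.
-/

noncomputable section

/-- The translates of `[-T, T]` by the odd multiples of `T` tile an interval of length `2NT`. -/
lemma integral_sum_translates (φ : ℝ → ℂ) (hφ : Continuous φ) (T y : ℝ) (N : ℕ) :
    (∫ t in -T..T, ∑ k ∈ Finset.range N, φ (y - t - (2 * (k : ℝ) + 1) * T)) =
      ∫ u in (y - 2 * N * T)..y, φ u := by
  induction N with
  | zero => simp
  | succ N ih =>
    simp_rw [Finset.sum_range_succ]
    rw [intervalIntegral.integral_add, ih]
    · have h1 : (∫ t in -T..T, φ (y - t - (2 * (N : ℝ) + 1) * T)) =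
          ∫ u in (y - 2 * (N + 1 : ℕ) * T)..(y - 2 * N * T), φ u := by
        have := intervalIntegral.integral_comp_sub_left (a := -T) (b := T) φ
          (y - (2 * (N : ℝ) + 1) * T)
        rw [show y - (2 * (N : ℝ) + 1) * T - T = y - 2 * (N + 1 : ℕ) * T by push_cast; ring,
          show y - (2 * (N : ℝ) + 1) * T - -T = y - 2 * N * T by ring] at this
        rw [← this]
        congr 1
        ext t
        congr 1
        ring
      rw [h1, add_comm]
      exact intervalIntegral.integral_add_adjacent_intervals
        (hφ.intervalIntegrable _ _) (hφ.intervalIntegrable _ _)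
    · exact Continuous.intervalIntegrable (by fun_prop) _ _
    · exact Continuous.intervalIntegrable (by fun_prop) _ _

lemma eq_zero_of_lt {v : ℝ × ℝ} {A : ℝ} {g : ℝ × ℝ → ℂ} (hsupp : Function.support g ⊆ Hr v A)
    {p : ℝ × ℝ} (hp : v.1 * p.1 + v.2 * p.2 < A) : g p = 0 := by
  by_contra h
  exact absurd (hsupp h) (not_le.mpr hp)

/-- Since `Hr v A` is closed, a function vanishing off it vanishes near each point off it, and so
does its partial derivative. -/
lemma support_pX {v : ℝ × ℝ} {A : ℝ} {g : ℝ × ℝ → ℂ} (hsupp : Function.support g ⊆ Hr v A) :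
    Function.support (pX g) ⊆ Hr v A := by
  intro p hp
  by_contra hlt
  have hlt : v.1 * p.1 + v.2 * p.2 < A := not_le.mp hlt
  refine hp ?_
  have hev : (fun x => g (x, p.2)) =ᶠ[nhds p.1] fun _ => 0 := by
    have : ∀ᶠ x in nhds p.1, v.1 * x + v.2 * p.2 < A :=
      ContinuousAt.eventually_lt (by fun_prop) continuousAt_const hlt
    filter_upwards [this] with x hx using eq_zero_of_lt hsupp hx
  simp [pX, hev.deriv_eq]

lemma support_pY {v : ℝ × ℝ} {A : ℝ} {g : ℝ × ℝ → ℂ} (hsupp : Function.support g ⊆ Hr v A) :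
    Function.support (pY g) ⊆ Hr v A := by
  intro p hp
  by_contra hlt
  have hlt : v.1 * p.1 + v.2 * p.2 < A := not_le.mp hlt
  refine hp ?_
  have hev : (fun y => g (p.1, y)) =ᶠ[nhds p.2] fun _ => 0 := by
    have : ∀ᶠ y in nhds p.2, v.1 * p.1 + v.2 * y < A :=
      ContinuousAt.eventually_lt (by fun_prop) continuousAt_const hlt
    filter_upwards [this] with y hy using eq_zero_of_lt hsupp hy
  simp [pY, hev.deriv_eq]

/-- Recovery of `g` from its mixed derivative. The hypothesis `ha` puts the whole segment
`{a} × [c, y]` in the region where `g` vanishes, so that `pY g (a, ·)` drops out of the first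
application of the fundamental theorem of calculus; `hc` makes `g (x, c)` drop out of the
second. -/
lemma integral_integral_mixed {v : ℝ × ℝ} (hv2 : 0 < v.2) {A : ℝ} {g : ℝ × ℝ → ℂ}
    (hg : C2Star g) (hsupp : Function.support g ⊆ Hr v A) {a x c y : ℝ} (hcy : c ≤ y)
    (ha : v.1 * a + v.2 * y < A) (hc : v.1 * x + v.2 * c < A) :
    (∫ w in a..x, ∫ u in c..y, pX (pY g) (w, u)) = g (x, y) := by
  obtain ⟨-, -, hdY, hdXY, -, hcont, -⟩ := hg
  have hpar : Continuous fun u => ∫ w in a..x, pX (pY g) (w, u) :=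
    intervalIntegral.continuous_parametric_intervalIntegral_of_continuous' (by fun_prop) _ _
  have hinner : ∀ u ∈ Set.uIcc c y, (∫ w in a..x, pX (pY g) (w, u)) = pY g (x, u) := by
    intro u hu
    rw [Set.uIcc_of_le hcy] at hu
    rw [intervalIntegral.integral_eq_sub_of_hasDerivAt (f := fun w => pY g (w, u))
      (f' := fun w => pX (pY g) (w, u))
      (fun w _ => (hdXY (w, u)).hasDerivAt) (Continuous.intervalIntegrable (by fun_prop) _ _)]
    have : pY g (a, u) = 0 := eq_zero_of_lt (support_pY hsupp)
      (by have := mul_le_mul_of_nonneg_left hu.2 hv2.le; dsimp only; linarith)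
    simp [this]
  -- `pY g` is not assumed continuous: its integrability in `y` comes from `hinner`.
  have hint : IntervalIntegrable (fun u => pY g (x, u)) MeasureTheory.volume c y :=
    IntervalIntegrable.congr (fun u hu => hinner u (Set.uIoc_subset_uIcc hu))
      (hpar.intervalIntegrable c y)
  have hswap : (∫ w in a..x, ∫ u in c..y, pX (pY g) (w, u)) =
      ∫ u in c..y, ∫ w in a..x, pX (pY g) (w, u) := by
    apply MeasureTheory.intervalIntegral_intervalIntegral_swap
    exact (Continuous.integrableOn_Icc (a := (min a x, min c y)) (b := (max a x, max c y))
      hcont).mono_set (by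
        rw [← Set.Icc_prod_Icc]
        exact Set.prod_mono Set.uIoc_subset_uIcc Set.uIoc_subset_uIcc)
  rw [hswap, intervalIntegral.integral_congr hinner,
    intervalIntegral.integral_eq_sub_of_hasDerivAt (f := fun u => g (x, u))
      (f' := fun u => pY g (x, u))
      (fun u _ => (hdY (x, u)).hasDerivAt) hint]
  have : g (x, c) = 0 := eq_zero_of_lt hsupp hc
  simp [this]

/-- On the half-plane `⟨z, v⟩ ≤ M`, a shift with `j ≥ N` or `k ≥ N` leaves
`Hr v A`, because the other shift only moves the point further left. -/
lemma support_translates_subset {v : ℝ × ℝ} (hv1 : 0 < v.1) (hv2 : 0 < v.2) {A S T : ℝ}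
    (hS : 0 < S) (hT : 0 < T) {h : ℝ × ℝ → ℂ} (hsupp : Function.support h ⊆ Hr v A)
    {M : ℝ} {N : ℕ} (hN1 : M < A + N * (v.1 * S)) (hN2 : M < A + N * (v.2 * T))
    {z : ℝ × ℝ} (hz : v.1 * z.1 + v.2 * z.2 ≤ M) :
    Function.support (fun jk : ℕ × ℕ =>
      h (z.1 - (2 * (jk.1 : ℝ) + 1) * S, z.2 - (2 * (jk.2 : ℝ) + 1) * T)) ⊆
      ↑(Finset.range N ×ˢ Finset.range N) := by
  rintro ⟨j, k⟩ hjk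
  have hge := hsupp hjk
  simp only [Hr, Set.mem_ofPred_eq] at hge
  have p1 : 0 < v.1 * S := mul_pos hv1 hS
  have p2 : 0 < v.2 * T := mul_pos hv2 hT
  have q1 : 0 ≤ j * (v.1 * S) := by positivity
  have q2 : 0 ≤ k * (v.2 * T) := by positivity
  have r1 : (j : ℝ) * (v.1 * S) < N * (v.1 * S) := by nlinarith
  have r2 : (k : ℝ) * (v.2 * T) < N * (v.2 * T) := by nlinarith
  have s1 : j < N := by exact_mod_cast lt_of_mul_lt_mul_right r1 p1.le
  have s2 : k < N := by exact_mod_cast lt_of_mul_lt_mul_right r2 p2.le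
  simp [s1, s2]

lemma finsum_eq_sum_range {v : ℝ × ℝ} (hv1 : 0 < v.1) (hv2 : 0 < v.2) {A S T : ℝ}
    (hS : 0 < S) (hT : 0 < T) {h : ℝ × ℝ → ℂ} (hsupp : Function.support h ⊆ Hr v A)
    {M : ℝ} {N : ℕ} (hN1 : M < A + N * (v.1 * S)) (hN2 : M < A + N * (v.2 * T))
    {z : ℝ × ℝ} (hz : v.1 * z.1 + v.2 * z.2 ≤ M) :
    (∑ᶠ jk : ℕ × ℕ,
      h (z.1 - (2 * (jk.1 : ℝ) + 1) * S, z.2 - (2 * (jk.2 : ℝ) + 1) * T)) =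
    ∑ k ∈ Finset.range N, ∑ j ∈ Finset.range N,
      h (z.1 - (2 * (j : ℝ) + 1) * S, z.2 - (2 * (k : ℝ) + 1) * T) := by
  rw [finsum_eq_sum_of_support_subset _
    (support_translates_subset hv1 hv2 hS hT hsupp hN1 hN2 hz), Finset.sum_product_right]

lemma exists_nat_bound {p q : ℝ} (hp : 0 < p) (hq : 0 < q) (A M : ℝ) :
    ∃ N : ℕ, M < A + N * p ∧ M < A + N * q := by
  obtain ⟨N, hN⟩ := exists_nat_gt (max ((M - A) / p) ((M - A) / q))
  have h1 := (div_lt_iff₀ hp).mp ((le_max_left _ _).trans_lt hN)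
  have h2 := (div_lt_iff₀ hq).mp ((le_max_right _ _).trans_lt hN)
  exact ⟨N, by linarith, by linarith⟩

/-- the series `f(x,y) = ∑_{j,k} (∂²g/∂x∂y)(x−(2j+1)S, y−(2k+1)T)`
is a well-defined (locally finite) sum, is continuous, and solves
`f ⋆ χ_{[−S,S]×[−T,T]} = g`. -/
theorem rectangle_inversion_right
    (v : ℝ × ℝ) (hv1 : 0 < v.1) (hv2 : 0 < v.2) (A : ℝ)
    (S T : ℝ) (hS : 0 < S) (hT : 0 < T)
    (g : ℝ × ℝ → ℂ) (hg : C2Star g) (hsupp : Function.support g ⊆ Hr v A)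
    (f : ℝ × ℝ → ℂ)
    (hf : ∀ z : ℝ × ℝ, f z = ∑ᶠ jk : ℕ × ℕ,
      pX (pY g) (z.1 - (2 * (jk.1 : ℝ) + 1) * S, z.2 - (2 * (jk.2 : ℝ) + 1) * T)) :
    (∀ z : ℝ × ℝ, (Function.support (fun jk : ℕ × ℕ =>
      pX (pY g) (z.1 - (2 * (jk.1 : ℝ) + 1) * S,
                 z.2 - (2 * (jk.2 : ℝ) + 1) * T))).Finite) ∧
    Continuous f ∧
    ∀ x y : ℝ, (∫ s in -S..S, ∫ t in -T..T, f (x - s, y - t)) = g (x, y) := by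
  have hsh : Function.support (pX (pY g)) ⊆ Hr v A := support_pX (support_pY hsupp)
  have p1 : 0 < v.1 * S := mul_pos hv1 hS
  have p2 : 0 < v.2 * T := mul_pos hv2 hT
  have hcont : Continuous (pX (pY g)) := hg.2.2.2.2.2.1
  refine ⟨fun z => ?_, ?_, fun x y => ?_⟩
  · obtain ⟨N, hN1, hN2⟩ := exists_nat_bound p1 p2 A (v.1 * z.1 + v.2 * z.2)
    exact (Finset.finite_toSet _).subset
      (support_translates_subset hv1 hv2 hS hT hsh hN1 hN2 le_rfl)
  · rw [continuous_iff_continuousAt]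
    intro z₀
    obtain ⟨N, hN1, hN2⟩ := exists_nat_bound p1 p2 A (v.1 * z₀.1 + v.2 * z₀.2 + 1)
    have hev : ∀ᶠ z : ℝ × ℝ in nhds z₀,
        v.1 * z.1 + v.2 * z.2 < v.1 * z₀.1 + v.2 * z₀.2 + 1 :=
      ContinuousAt.eventually_lt (by fun_prop) continuousAt_const (lt_add_one _)
    have hsum : Continuous fun z : ℝ × ℝ => ∑ k ∈ Finset.range N, ∑ j ∈ Finset.range N,
        pX (pY g) (z.1 - (2 * (j : ℝ) + 1) * S, z.2 - (2 * (k : ℝ) + 1) * T) := by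
      fun_prop
    refine hsum.continuousAt.congr ?_
    filter_upwards [hev] with z hz
    rw [hf z, finsum_eq_sum_range hv1 hv2 hS hT hsh hN1 hN2 hz.le]
  · -- `M` bounds `⟨·, v⟩` on the rectangle of integration `[x - S, x + S] × [y - T, y + T]`.
    obtain ⟨N, hN1, hN2⟩ := exists_nat_bound p1 p2 A (v.1 * (x + S) + v.2 * (y + T))
    have hcY : y - 2 * N * T ≤ y := by
      have : 0 ≤ 2 * (N : ℝ) * T := by positivity
      linarith
    have q1 : 0 ≤ N * (v.1 * S) := by positivity
    have q2 : 0 ≤ N * (v.2 * T) := by positivity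
    have hΦ : Continuous fun w => ∫ u in (y - 2 * N * T)..y, pX (pY g) (w, u) :=
      intervalIntegral.continuous_parametric_intervalIntegral_of_continuous' (by fun_prop) _ _
    rw [← integral_integral_mixed hv2 hg hsupp (a := x - 2 * N * S) hcY
      (by linarith) (by linarith), ← integral_sum_translates _ hΦ S x N]
    refine intervalIntegral.integral_congr fun s hs => ?_
    rw [Set.uIcc_of_le (by linarith)] at hs
    rw [← intervalIntegral.integral_finsetSum
        (fun j _ => Continuous.intervalIntegrable (by fun_prop) _ _),
      ← integral_sum_translates _ (by fun_prop) T y N]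
    refine intervalIntegral.integral_congr fun t ht => ?_
    rw [Set.uIcc_of_le (by linarith)] at ht
    rw [hf, finsum_eq_sum_range hv1 hv2 hS hT hsh hN1 hN2]
    have b1 := mul_le_mul_of_nonneg_left (show x - s ≤ x + S by linarith [hs.1]) hv1.le
    have b2 := mul_le_mul_of_nonneg_left (show y - t ≤ y + T by linarith [ht.1]) hv2.le
    exact add_le_add b1 b2
end
end
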